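/- Let p ∈ P^log with 1 < p^- ≤ p^+ < ∞, v ∈ ℕ₀, and f ∈ L^{p(·)} with supp 𝓕f ⊂ {ξ : |ξ| ≤ 2^{v+1}}. Then for any measurable g : ℝ^n → ℂ with ‖exp((2 + 2^{vn}|·|) c_log(p)) g‖_{L^1} < ∞, one has ‖f * g‖_{p(·)} ≤ c ‖exp((2 + 2^{vn}|·|) c_log(p)) g‖_{L^1} ‖f‖_{p(·)}, with c > 0 independent of v. -/

import Mathlib

open MeasureTheory ENNReal SchwartzMap

/-- The Luxemburg (quasi-)norm of the variable Lebesgue space `L^{p(·)}`. -/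
noncomputable def luxNorm {n : ℕ} (p : EuclideanSpace ℝ (Fin n) → ℝ)
    (f : EuclideanSpace ℝ (Fin n) → ℂ) : ℝ≥0∞ :=
  sInf {μ : ℝ≥0∞ | 0 < μ ∧ ∫⁻ x, ((‖f x‖₊ : ℝ≥0∞) / μ) ^ p x ≤ 1}

/-!
Choose a Schwartz function `ψ` equal to `1` near the support of `𝓕 f`. Then `f = f * 𝓕⁻ ψ`, and
with `R = 2 ^ v` the kernel `𝓕⁻ ψ` is dominated, for every `m`, by a multiple of the bracket kernel
`η = R ^ n (1 + R |·|) ^ (-m)`. Since `η (x - y) ≤ (1 + R |y|) ^ m η x`, the translation by `y` in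
`f * g` costs only a polynomial weight on `g`: `|f * g| ≤ C ‖(1 + R |·|) ^ m g‖₁ (|f| * η)`. If
`c_log(p) > 0`, the exponential weight dominates the polynomial one; if `c_log(p) = 0`, then `p` is
constant and the estimate is Young's inequality.

The modular of `|f| * η` is bounded uniformly in `R`: Hölder's inequality reduces this to replacing
`|f y| ^ p x` by `|f y| ^ p y` under the kernel. Where `(1 + |y|) ^ (-k) ≤ |f y| ≤ R ^ n`, the local
and the decay log-Hölder conditions bound the quotient by a power of `1 + R |x - y|`, which is
absorbed into `η`. Smaller values of `|f|` contribute an integrable error, and the part of `f` above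
the height `R ^ n` is controlled by its modular, since `η ≤ R ^ n`.
-/

open Module

section LogHolder

variable {E : Type*} [NormedAddCommGroup E] {p : E → ℝ} {c : ℝ}

/-- Global log-Hölder continuity with constant `c`: the modulus of continuity at distance `r` is
`c / log (e + 1 / r)`. At `r = 0` the convention `1 / 0 = 0` makes the bound equal to `c`. -/
def LogHolderWith (c : ℝ) (p : E → ℝ) : Prop :=
  ∀ x y, |p x - p y| ≤ c / Real.log (Real.exp 1 + 1 / ‖x - y‖)

/-- The log-Hölder decay condition with constant `c`: convergence to `l` at infinity at the rate
`c / log (e + ‖x‖)`. For a variable exponent `p` it is imposed on `1 / p`. -/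
def LogDecayWith (c : ℝ) (p : E → ℝ) (l : ℝ) : Prop :=
  ∀ x, |p x - l| ≤ c / Real.log (Real.exp 1 + ‖x‖)

lemma one_le_log_exp_one_add {t : ℝ} (ht : 0 ≤ t) : 1 ≤ Real.log (Real.exp 1 + t) :=
  (Real.le_log_iff_exp_le (by positivity)).2 (le_add_of_nonneg_right ht)

namespace LogHolderWith

lemma nonneg (hp : LogHolderWith c p) : 0 ≤ c := by
  simpa using hp 0 0

lemma abs_sub_le (hp : LogHolderWith c p) (x y : E) : |p x - p y| ≤ c :=
  (hp x y).trans (div_le_self hp.nonneg (one_le_log_exp_one_add (by positivity)))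

protected lemma continuous (hp : LogHolderWith c p) : Continuous p := by
  refine Metric.continuous_iff.2 fun y ε hε ↦ ⟨Real.exp (-(c / ε)), Real.exp_pos _, fun x hx ↦ ?_⟩
  rcases eq_or_ne x y with rfl | hxy
  · simpa
  rw [dist_eq_norm] at hx
  have hr : 0 < ‖x - y‖ := norm_pos_iff.2 (sub_ne_zero.2 hxy)
  have hL : 0 < Real.log (Real.exp 1 + 1 / ‖x - y‖) :=
    zero_lt_one.trans_le (one_le_log_exp_one_add (by positivity))
  have hlog : c / ε < Real.log (Real.exp 1 + 1 / ‖x - y‖) := by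
    rw [Real.lt_log_iff_exp_lt (by positivity)]
    calc Real.exp (c / ε) < 1 / ‖x - y‖ := by
          rwa [Real.exp_neg, lt_inv_comm₀ hr (Real.exp_pos _), inv_eq_one_div] at hx
      _ < Real.exp 1 + 1 / ‖x - y‖ := lt_add_of_pos_left _ (Real.exp_pos 1)
  rw [Real.dist_eq]
  exact (hp x y).trans_lt ((div_lt_comm₀ hL hε).2 hlog)

lemma abs_sub_mul_log_le (hp : LogHolderWith c p) {R : ℝ} (hR : 0 < R) (x y : E) :
    |p x - p y| * Real.log R ≤ c * (1 + Real.log (1 + R * ‖x - y‖)) := by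
  rcases eq_or_ne x y with rfl | hxy
  · simpa using hp.nonneg
  have hr : 0 < ‖x - y‖ := norm_pos_iff.2 (sub_ne_zero.2 hxy)
  set L := Real.log (Real.exp 1 + 1 / ‖x - y‖)
  have hL : 0 < L := zero_lt_one.trans_le (one_le_log_exp_one_add (by positivity))
  have hs : 0 ≤ Real.log (1 + R * ‖x - y‖) :=
    Real.log_nonneg (le_add_of_nonneg_right (by positivity))
  have hlogR : Real.log R ≤ L + Real.log (1 + R * ‖x - y‖) := by
    rw [← Real.log_mul (by positivity) (by positivity)]
    refine Real.log_le_log hR ?_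
    calc R = 1 / ‖x - y‖ * (R * ‖x - y‖) := by field_simp
      _ ≤ _ := by
        gcongr
        · exact le_add_of_nonneg_left (Real.exp_pos 1).le
        · exact le_add_of_nonneg_left zero_le_one
  calc |p x - p y| * Real.log R
      ≤ |p x - p y| * L + |p x - p y| * Real.log (1 + R * ‖x - y‖) := by
        rw [← mul_add]
        gcongr
    _ ≤ c + c * Real.log (1 + R * ‖x - y‖) := by
        gcongr
        · exact (le_div_iff₀ hL).1 (hp x y)
        · exact hp.abs_sub_le x y
    _ = _ := by ring

end LogHolderWith

lemma log_one_add_norm_le_log_exp_one_add (x y : E) :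
    Real.log (1 + ‖y‖) ≤ Real.log (Real.exp 1 + ‖x‖) + Real.log (1 + ‖x - y‖) := by
  rw [← Real.log_mul (by positivity) (by positivity)]
  refine Real.log_le_log (by positivity) ?_
  have htri : ‖y‖ ≤ ‖x‖ + ‖x - y‖ := norm_le_insert x y
  have he : 1 ≤ Real.exp 1 := Real.one_le_exp zero_le_one
  nlinarith [norm_nonneg x, norm_nonneg (x - y)]

namespace LogDecayWith

lemma nonneg {l : ℝ} (hp : LogDecayWith c p l) : 0 ≤ c := by
  simpa using (abs_nonneg _).trans (hp 0)

lemma abs_sub_mul_log_le {l : ℝ} (hp : LogDecayWith c p l) (x y : E) :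
    |p x - p y| * Real.log (1 + ‖y‖) ≤ 2 * c * (1 + Real.log (1 + ‖x - y‖)) := by
  have hL (z : E) : 1 ≤ Real.log (Real.exp 1 + ‖z‖) := one_le_log_exp_one_add (norm_nonneg z)
  set Lx := Real.log (Real.exp 1 + ‖x‖)
  set Ly := Real.log (Real.exp 1 + ‖y‖)
  set s := Real.log (1 + ‖x - y‖)
  have hs : 0 ≤ s := Real.log_nonneg (by simp)
  have hc := hp.nonneg
  have hLx : c / Lx * Lx = c := div_mul_cancel₀ c (by linarith [hL x])
  have hLy : c / Ly * Ly = c := div_mul_cancel₀ c (by linarith [hL y])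
  have hlx : c / Lx * Real.log (1 + ‖y‖) ≤ c / Lx * (Lx + s) := by
    have := hL x
    gcongr
    exact log_one_add_norm_le_log_exp_one_add x y
  have hly : c / Ly * Real.log (1 + ‖y‖) ≤ c / Ly * Ly := by
    have := hL y
    gcongr
    exact Real.log_le_log (by positivity) (by gcongr; exact Real.one_le_exp zero_le_one)
  have htri : |p x - p y| ≤ c / Lx + c / Ly :=
    (_root_.abs_sub_le _ l _).trans (add_le_add (hp x) (abs_sub_comm l (p y) ▸ hp y))
  calc |p x - p y| * Real.log (1 + ‖y‖) ≤ (c / Lx + c / Ly) * Real.log (1 + ‖y‖) := by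
        gcongr
        exact Real.log_nonneg (by simp)
    _ ≤ 2 * c + c / Lx * s := by linarith
    _ ≤ 2 * c + c * s := by
        gcongr
        exact div_le_self hc (hL x)
    _ ≤ _ := by nlinarith

end LogDecayWith

lemma abs_sub_le_sq_mul_abs_one_div_sub {a b B : ℝ} (ha : 0 < a) (hb : 0 < b) (haB : a ≤ B)
    (hbB : b ≤ B) : |a - b| ≤ B ^ 2 * |1 / a - 1 / b| := by
  have hB : 0 ≤ B := ha.le.trans haB
  have h : a - b = -(a * b * (1 / a - 1 / b)) := by
    field_simp
    ring
  rw [h, abs_neg, abs_mul, abs_of_pos (by positivity), sq]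
  gcongr

lemma pow_rpow_le_pow_of_mul_log_le {b s δ A : ℝ} {k M : ℕ} (hb : 0 < b) (hs : 1 ≤ s)
    (h : δ * Real.log b ≤ A * (1 + Real.log s)) (hM : k * A ≤ M) :
    (b ^ k) ^ δ ≤ (Real.exp 1 * s) ^ M := by
  have hs0 : 0 < s := zero_lt_one.trans_le hs
  have hlog : 0 ≤ Real.log s := Real.log_nonneg hs
  rw [← Real.log_le_log_iff (by positivity) (by positivity), Real.log_rpow (by positivity),
    Real.log_pow, Real.log_pow, Real.log_mul (by positivity) hs0.ne', Real.log_exp]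
  calc δ * (k * Real.log b) = k * (δ * Real.log b) := by ring
    _ ≤ k * (A * (1 + Real.log s)) := by gcongr
    _ = k * A * (1 + Real.log s) := by ring
    _ ≤ M * (1 + Real.log s) := by gcongr

end LogHolder

section ExponentExchange

lemma one_le_rpow_of_nonneg {t : ℝ≥0∞} {q : ℝ} (ht : 1 ≤ t) (hq : 0 ≤ q) : 1 ≤ t ^ q := by
  simpa using ENNReal.rpow_le_rpow_of_exponent_le ht hq

lemma rpow_sub_one_mul_self (t : ℝ≥0∞) {q : ℝ} (hq : 1 ≤ q) : t ^ (q - 1) * t = t ^ q := by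
  nth_rewrite 2 [← ENNReal.rpow_one t]
  rw [← ENNReal.rpow_add_of_nonneg _ _ (sub_nonneg.2 hq) zero_le_one, sub_add_cancel]

lemma add_rpow_le_two_mul_rpow_mul {s t c J : ℝ≥0∞} {q : ℝ} (hq : 1 ≤ q) (hs : s ^ q ≤ c ^ q * J)
    (ht : t ^ q ≤ c ^ q * J) : (s + t) ^ q ≤ (2 * c) ^ q * J :=
  calc (s + t) ^ q ≤ 2 ^ (q - 1) * (s ^ q + t ^ q) :=
        ENNReal.rpow_add_le_mul_rpow_add_rpow _ _ hq
    _ ≤ 2 ^ (q - 1) * (c ^ q * J + c ^ q * J) := by gcongr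
    _ = 2 ^ (q - 1) * 2 * c ^ q * J := by ring
    _ = (2 * c) ^ q * J := by
        rw [rpow_sub_one_mul_self 2 hq, ENNReal.mul_rpow_of_nonneg _ _ (zero_le_one.trans hq)]

lemma rpow_le_mul_add_rpow {t T u B : ℝ≥0∞} {q r : ℝ} (htT : t ≤ T) (hT : 1 ≤ T) (hT' : T ≠ ⊤)
    (hu1 : u ≤ 1) (hq : 1 ≤ q) (hTB : T ^ |q - r| ≤ B) (huB : u⁻¹ ^ |q - r| ≤ B) :
    t ^ q ≤ B * (u + t ^ r) := by
  have hB : 1 ≤ B := (one_le_rpow_of_nonneg hT (abs_nonneg _)).trans hTB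
  rcases le_or_gt t u with htu | hut
  · calc t ^ q ≤ t ^ (1 : ℝ) := ENNReal.rpow_le_rpow_of_exponent_ge (htu.trans hu1) hq
      _ ≤ u := by rwa [ENNReal.rpow_one]
      _ ≤ 1 * (u + t ^ r) := by rw [one_mul]; exact le_self_add
      _ ≤ B * (u + t ^ r) := by gcongr
  have ht0 : t ≠ 0 := hut.ne_bot
  have htq : t ^ (q - r) ≤ B := by
    rcases le_total t 1 with ht1 | ht1
    · calc t ^ (q - r) ≤ t ^ (-|q - r|) :=
            ENNReal.rpow_le_rpow_of_exponent_ge ht1 (neg_abs_le _)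
        _ = t⁻¹ ^ |q - r| := by rw [ENNReal.rpow_neg, ENNReal.inv_rpow]
        _ ≤ u⁻¹ ^ |q - r| := by gcongr
        _ ≤ B := huB
    · calc t ^ (q - r) ≤ t ^ |q - r| := ENNReal.rpow_le_rpow_of_exponent_le ht1 (le_abs_self _)
        _ ≤ T ^ |q - r| := by gcongr
        _ ≤ B := hTB
  calc t ^ q = t ^ (q - r) * t ^ r := by
        rw [← ENNReal.rpow_add _ _ ht0 (ne_top_of_le_ne_top hT' htT), sub_add_cancel]
    _ ≤ B * (u + t ^ r) := by
        gcongr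
        exact le_add_self

lemma rpow_sub_one_mul_le_mul_rpow {t T B : ℝ≥0∞} {q r : ℝ} (hT : 1 ≤ T) (hT' : T ≠ ⊤)
    (hTt : T ≤ t) (hr : 1 ≤ r) (hTB : T ^ |q - r| ≤ B) : T ^ (q - 1) * t ≤ B * t ^ r := by
  have hT0 : T ≠ 0 := (zero_lt_one.trans_le hT).ne'
  calc T ^ (q - 1) * t = T ^ (q - r) * (T ^ (r - 1) * t) := by
        rw [← mul_assoc, ← ENNReal.rpow_add _ _ hT0 hT', sub_add_sub_cancel]
    _ ≤ B * (t ^ (r - 1) * t) := by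
        gcongr
        exact (ENNReal.rpow_le_rpow_of_exponent_le hT (le_abs_self _)).trans hTB
    _ = B * t ^ r := by rw [rpow_sub_one_mul_self t hr]

variable {α : Type*} [MeasurableSpace α] {μ : Measure α} {a u B K L : α → ℝ≥0∞} {p : α → ℝ}
  {q : ℝ} {T C : ℝ≥0∞}

-- Hölder's inequality for `F K = (F ^ q K) ^ (1 / q) * K ^ (1 - 1 / q)`.
lemma rpow_lintegral_mul_le {F : α → ℝ≥0∞} (hF : AEMeasurable F μ) (hK : AEMeasurable K μ)
    (hq : 1 ≤ q) :
    (∫⁻ x, F x * K x ∂μ) ^ q ≤ (∫⁻ x, K x ∂μ) ^ (q - 1) * ∫⁻ x, F x ^ q * K x ∂μ := by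
  have hq0 : 0 < q := zero_lt_one.trans_le hq
  have hq1 : 0 ≤ 1 - 1 / q := sub_nonneg.2 ((div_le_one hq0).2 hq)
  have hFK (x) : F x * K x = (F x ^ q * K x) ^ (1 / q) * K x ^ (1 - 1 / q) := by
    rw [ENNReal.mul_rpow_of_nonneg _ _ (by positivity), ← ENNReal.rpow_mul,
      mul_one_div_cancel hq0.ne', ENNReal.rpow_one, mul_assoc,
      ← ENNReal.rpow_add_of_nonneg _ _ (by positivity) hq1, add_sub_cancel, ENNReal.rpow_one]
  calc (∫⁻ x, F x * K x ∂μ) ^ q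
      ≤ ((∫⁻ x, F x ^ q * K x ∂μ) ^ (1 / q) * (∫⁻ x, K x ∂μ) ^ (1 - 1 / q)) ^ q := by
        simp only [hFK]
        gcongr
        exact ENNReal.lintegral_mul_norm_pow_le ((hF.pow_const q).mul hK) hK (by positivity) hq1
          (by ring)
    _ = (∫⁻ x, K x ∂μ) ^ (q - 1) * ∫⁻ x, F x ^ q * K x ∂μ := by
        rw [ENNReal.mul_rpow_of_nonneg _ _ hq0.le, ← ENNReal.rpow_mul, ← ENNReal.rpow_mul,
          one_div_mul_cancel hq0.ne', ENNReal.rpow_one, mul_comm, sub_mul,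
          one_div_mul_cancel hq0.ne', one_mul]

lemma rpow_lintegral_mul_le_of_le (ha : AEMeasurable a μ) (hK : AEMeasurable K μ) (hq : 1 ≤ q)
    (hT : 1 ≤ T) (hT' : T ≠ ⊤) (haT : ∀ y, a y ≤ T) (hu1 : ∀ y, u y ≤ 1)
    (hTB : ∀ y, T ^ |q - p y| ≤ B y) (huB : ∀ y, (u y)⁻¹ ^ |q - p y| ≤ B y)
    (hC : C ≠ ⊤) (hKC : ∫⁻ y, K y ∂μ ≤ C) (hBK : ∀ y, B y * K y ≤ C * L y) :
    (∫⁻ y, a y * K y ∂μ) ^ q ≤ C ^ q * ∫⁻ y, (u y + a y ^ p y) * L y ∂μ := by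
  have hpt (y) : a y ^ q * K y ≤ C * ((u y + a y ^ p y) * L y) :=
    calc a y ^ q * K y ≤ B y * (u y + a y ^ p y) * K y := by
          gcongr
          exact rpow_le_mul_add_rpow (haT y) hT hT' (hu1 y) hq (hTB y) (huB y)
      _ = (u y + a y ^ p y) * (B y * K y) := by ring
      _ ≤ (u y + a y ^ p y) * (C * L y) := mul_le_mul_right (hBK y) _
      _ = C * ((u y + a y ^ p y) * L y) := by ring
  calc (∫⁻ y, a y * K y ∂μ) ^ q ≤ (∫⁻ y, K y ∂μ) ^ (q - 1) * ∫⁻ y, a y ^ q * K y ∂μ :=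
        rpow_lintegral_mul_le ha hK hq
    _ ≤ C ^ (q - 1) * ∫⁻ y, C * ((u y + a y ^ p y) * L y) ∂μ :=
        mul_le_mul' (ENNReal.rpow_le_rpow hKC (sub_nonneg.2 hq)) (lintegral_mono hpt)
    _ = C ^ q * ∫⁻ y, (u y + a y ^ p y) * L y ∂μ := by
        rw [lintegral_const_mul' _ _ hC, ← mul_assoc, rpow_sub_one_mul_self C hq]

lemma rpow_lintegral_mul_le_of_eq_zero_or_le (hq : 1 ≤ q) (hp : ∀ y, 1 ≤ p y)
    (hT : 1 ≤ T) (hT' : T ≠ ⊤) (haT : ∀ y, a y = 0 ∨ T ≤ a y) (hmod : ∫⁻ y, a y ^ p y ∂μ ≤ 1)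
    (hTB : ∀ y, T ^ |q - p y| ≤ B y) (hLT : ∀ y, L y ≤ T)
    (hC : C ≠ ⊤) (hBK : ∀ y, B y * K y ≤ C * L y) :
    (∫⁻ y, a y * K y ∂μ) ^ q ≤ C ^ q * ∫⁻ y, a y ^ p y * L y ∂μ := by
  have hq0 : 0 ≤ q := zero_le_one.trans hq
  have hq1 : 0 ≤ q - 1 := sub_nonneg.2 hq
  have hT0 : T ≠ 0 := (zero_lt_one.trans_le hT).ne'
  set I := ∫⁻ y, a y * K y ∂μ
  set J := ∫⁻ y, a y ^ p y * L y ∂μ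
  have hJT : J ≤ T :=
    calc J ≤ ∫⁻ y, a y ^ p y * T ∂μ := lintegral_mono fun y ↦ mul_le_mul_right (hLT y) _
      _ = (∫⁻ y, a y ^ p y ∂μ) * T := lintegral_mul_const' _ _ hT'
      _ ≤ T := mul_le_of_le_one_left' hmod
  have hpt (y) : T ^ (q - 1) * (a y * K y) ≤ C * (a y ^ p y * L y) := by
    rcases haT y with h | h
    · simp [h]
    calc T ^ (q - 1) * (a y * K y) = T ^ (q - 1) * a y * K y := (mul_assoc _ _ _).symm
      _ ≤ B y * a y ^ p y * K y :=
          mul_le_mul' (rpow_sub_one_mul_le_mul_rpow hT hT' h (hp y) (hTB y)) le_rfl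
      _ = a y ^ p y * (B y * K y) := by ring
      _ ≤ a y ^ p y * (C * L y) := mul_le_mul_right (hBK y) _
      _ = C * (a y ^ p y * L y) := by ring
  have hIJ : T ^ (q - 1) * I ≤ C * J := by
    rw [← lintegral_const_mul' _ _ (ENNReal.rpow_ne_top_of_nonneg hq1 hT'),
      ← lintegral_const_mul' _ _ hC]
    exact lintegral_mono hpt
  have hcancel : T ^ (q - 1) * I ^ q ≤ T ^ (q - 1) * (C ^ q * J) :=
    calc T ^ (q - 1) * I ^ q ≤ (T ^ (q - 1)) ^ q * I ^ q := by
          gcongr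
          exact ENNReal.le_rpow_self_of_one_le (one_le_rpow_of_nonneg hT hq1) hq
      _ = (T ^ (q - 1) * I) ^ q := (ENNReal.mul_rpow_of_nonneg _ _ hq0).symm
      _ ≤ (C * J) ^ q := by gcongr
      _ = C ^ q * (J ^ (q - 1) * J) := by
          rw [ENNReal.mul_rpow_of_nonneg _ _ hq0, rpow_sub_one_mul_self J hq]
      _ ≤ C ^ q * (T ^ (q - 1) * J) := by gcongr
      _ = T ^ (q - 1) * (C ^ q * J) := by ring
  exact (ENNReal.mul_le_mul_iff_right (ENNReal.rpow_pos (pos_iff_ne_zero.2 hT0) hT').ne'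
    (ENNReal.rpow_ne_top_of_nonneg hq1 hT')).1 hcancel

lemma rpow_lintegral_mul_le_lintegral_add_rpow_mul (ha : Measurable a) (hK : AEMeasurable K μ)
    (hq : 1 ≤ q) (hp : ∀ y, 1 ≤ p y) (hmod : ∫⁻ y, a y ^ p y ∂μ ≤ 1) (hT : 1 ≤ T) (hT' : T ≠ ⊤)
    (hu1 : ∀ y, u y ≤ 1) (hTB : ∀ y, T ^ |q - p y| ≤ B y)
    (huB : ∀ y, (u y)⁻¹ ^ |q - p y| ≤ B y) (hLT : ∀ y, L y ≤ T) (hC : C ≠ ⊤)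
    (hKC : ∫⁻ y, K y ∂μ ≤ C) (hBK : ∀ y, B y * K y ≤ C * L y) :
    (∫⁻ y, a y * K y ∂μ) ^ q ≤ (2 * C) ^ q * ∫⁻ y, (u y + a y ^ p y) * L y ∂μ := by
  set S : Set α := {y | a y ≤ T}
  have hS : MeasurableSet S := measurableSet_le ha measurable_const
  set b := S.indicator a
  set d := Sᶜ.indicator a
  have hb : Measurable b := ha.indicator hS
  have hba (y) : b y ≤ a y := S.indicator_le_self a y
  have hda (y) : d y ≤ a y := Sᶜ.indicator_le_self a y
  have hbT (y) : b y ≤ T := by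
    by_cases hy : y ∈ S
    · exact (hba y).trans hy
    · exact (Set.indicator_of_notMem hy a).trans_le zero_le
  have hdT (y) : d y = 0 ∨ T ≤ d y := by
    by_cases hy : y ∈ S
    · exact .inl (Set.indicator_of_notMem (by simpa using hy) a)
    · exact .inr ((not_le.1 hy).le.trans_eq (Set.indicator_of_mem (s := Sᶜ) hy a).symm)
  have hsplit : ∫⁻ y, a y * K y ∂μ = ∫⁻ y, b y * K y ∂μ + ∫⁻ y, d y * K y ∂μ := by
    have hbK : AEMeasurable (fun y ↦ b y * K y) μ := hb.aemeasurable.mul hK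
    rw [← lintegral_add_left' hbK]
    refine lintegral_congr fun y ↦ ?_
    rw [← add_mul]
    exact congrArg (· * K y) (congrFun (S.indicator_self_add_compl a) y).symm
  have hpos (y) : 0 ≤ p y := zero_le_one.trans (hp y)
  set J := ∫⁻ y, (u y + a y ^ p y) * L y ∂μ
  have hbJ : (∫⁻ y, b y * K y ∂μ) ^ q ≤ C ^ q * J := by
    refine (rpow_lintegral_mul_le_of_le hb.aemeasurable hK hq hT hT' hbT hu1 hTB huB hC hKC
      hBK).trans ?_
    exact mul_le_mul_right (lintegral_mono fun y ↦ mul_le_mul_left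
      (add_le_add_right (ENNReal.rpow_le_rpow (hba y) (hpos y)) _) _) _
  have hdJ : (∫⁻ y, d y * K y ∂μ) ^ q ≤ C ^ q * J := by
    refine (rpow_lintegral_mul_le_of_eq_zero_or_le hq hp hT hT' hdT
      ((lintegral_mono fun y ↦ ENNReal.rpow_le_rpow (hda y) (hpos y)).trans hmod) hTB hLT hC
      hBK).trans ?_
    exact mul_le_mul_right (lintegral_mono fun y ↦ mul_le_mul_left
      (le_add_left (ENNReal.rpow_le_rpow (hda y) (hpos y))) _) _
  exact hsplit ▸ add_rpow_le_two_mul_rpow_mul hq hbJ hdJ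

end ExponentExchange

section AddGroup

variable {G : Type*} [AddGroup G] [MeasurableSpace G] [MeasurableAdd₂ G] [MeasurableNeg G]
  {ν : Measure G} [SFinite ν] [ν.IsAddRightInvariant] {F K : G → ℝ≥0∞}

lemma lintegral_lintegral_mul_sub (hF : Measurable F) (hK : Measurable K) :
    ∫⁻ x, ∫⁻ y, F y * K (x - y) ∂ν ∂ν = (∫⁻ y, F y ∂ν) * ∫⁻ y, K y ∂ν := by
  rw [lintegral_lintegral_swap (by fun_prop), ← lintegral_mul_const _ hF]
  refine lintegral_congr fun y ↦ ?_
  rw [lintegral_const_mul _ (by fun_prop), lintegral_sub_right_eq_self K]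

lemma lintegral_rpow_lintegral_sub_mul_le {q : ℝ} (hq : 1 ≤ q) (hF : Measurable F)
    (hK : Measurable K) :
    ∫⁻ x, (∫⁻ y, F (x - y) * K y ∂ν) ^ q ∂ν ≤ (∫⁻ y, K y ∂ν) ^ q * ∫⁻ y, F y ^ q ∂ν := by
  calc ∫⁻ x, (∫⁻ y, F (x - y) * K y ∂ν) ^ q ∂ν
      ≤ ∫⁻ x, (∫⁻ y, K y ∂ν) ^ (q - 1) * ∫⁻ y, K y * F (x - y) ^ q ∂ν ∂ν := by
        refine lintegral_mono fun x ↦ ?_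
        simp_rw [mul_comm (K _)]
        exact rpow_lintegral_mul_le (by fun_prop) hK.aemeasurable hq
    _ = (∫⁻ y, K y ∂ν) ^ (q - 1) * ((∫⁻ y, K y ∂ν) * ∫⁻ y, F y ^ q ∂ν) := by
        rw [lintegral_const_mul _ (by fun_prop),
          lintegral_lintegral_mul_sub hK (K := fun y ↦ F y ^ q) (by fun_prop)]
    _ = (∫⁻ y, K y ∂ν) ^ q * ∫⁻ y, F y ^ q ∂ν := by
        rw [← mul_assoc, rpow_sub_one_mul_self _ hq]

end AddGroup

section BracketKernel

variable {E : Type*} [NormedAddCommGroup E] [NormedSpace ℝ E] {R : ℝ} {m : ℕ}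

/-- The bracket kernel `R ^ dim E * (1 + R * ‖x‖) ^ (-m)` of order `m` at scale `R⁻¹`, the standard
majorant of a dilated Schwartz function. The factor `R ^ dim E` makes its mass independent
of `R`. -/
noncomputable def bracketKernel (R : ℝ) (m : ℕ) (x : E) : ℝ≥0∞ :=
  ENNReal.ofReal (R ^ finrank ℝ E * ((1 + R * ‖x‖) ^ m)⁻¹)

lemma inv_one_add_norm_sub_pow_le {F : Type*} [SeminormedAddCommGroup F] {R : ℝ} (hR : 0 ≤ R)
    (m : ℕ) (x y : F) :
    ((1 + R * ‖x - y‖) ^ m)⁻¹ ≤ ((1 + R * ‖x‖) ^ m)⁻¹ * (1 + R * ‖y‖) ^ m := by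
  rw [← div_eq_inv_mul, le_div_iff₀ (by positivity), inv_mul_le_iff₀ (by positivity), ← mul_pow]
  gcongr
  have htri : ‖x‖ ≤ ‖x - y‖ + ‖y‖ := norm_le_norm_sub_add x y
  nlinarith [mul_nonneg (mul_nonneg hR (norm_nonneg (x - y))) (mul_nonneg hR (norm_nonneg y)),
    mul_le_mul_of_nonneg_left htri hR]

lemma bracketKernel_sub_le (hR : 0 ≤ R) (x y : E) :
    bracketKernel R m (x - y) ≤ bracketKernel R m x * ENNReal.ofReal ((1 + R * ‖y‖) ^ m) := by
  unfold bracketKernel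
  rw [← ENNReal.ofReal_mul (by positivity), mul_assoc]
  gcongr
  exact inv_one_add_norm_sub_pow_le hR m x y

lemma bracketKernel_anti (hR : 0 ≤ R) (x : E) : Antitone fun m ↦ bracketKernel R m x := by
  intro k m hkm
  dsimp only [bracketKernel]
  gcongr
  exact le_add_of_nonneg_right (by positivity)

lemma bracketKernel_le (hR : 0 ≤ R) (x : E) :
    bracketKernel R m x ≤ ENNReal.ofReal (R ^ finrank ℝ E) := by
  simpa [bracketKernel] using bracketKernel_anti hR x (Nat.zero_le m)

lemma ofReal_pow_mul_bracketKernel_add (hR : 0 ≤ R) (k m : ℕ) (x : E) :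
    ENNReal.ofReal ((1 + R * ‖x‖) ^ k) * bracketKernel R (k + m) x = bracketKernel R m x := by
  unfold bracketKernel
  rw [← ENNReal.ofReal_mul (by positivity)]
  congr 1
  field_simp
  ring

lemma bracketKernel_one_inv (x : E) :
    (bracketKernel 1 m x)⁻¹ = ENNReal.ofReal ((1 + ‖x‖) ^ m) := by
  rw [bracketKernel, ← ENNReal.ofReal_inv_of_pos (by positivity)]
  simp

variable [MeasurableSpace E] [BorelSpace E]

@[fun_prop]
lemma measurable_bracketKernel : Measurable (bracketKernel R m : E → ℝ≥0∞) := by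
  unfold bracketKernel
  fun_prop

variable [FiniteDimensional ℝ E] {μ : Measure E} [μ.IsAddHaarMeasure]

lemma lintegral_bracketKernel_one_ne_top (hm : finrank ℝ E < m) :
    ∫⁻ x : E, bracketKernel 1 m x ∂μ ≠ ⊤ := by
  have h := finite_integral_one_add_norm (E := E) (μ := μ) (r := m) (mod_cast hm)
  refine ne_of_eq_of_ne (lintegral_congr fun x ↦ ?_) h.ne
  simp [bracketKernel, Real.rpow_neg (show 0 ≤ 1 + ‖x‖ by positivity)]

lemma lintegral_bracketKernel (hR : 0 < R) :
    ∫⁻ x, bracketKernel R m x ∂μ = ∫⁻ x, bracketKernel 1 m x ∂μ := by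
  have hscale (x : E) : bracketKernel R m x =
      ENNReal.ofReal (R ^ finrank ℝ E) * bracketKernel 1 m (R • x) := by
    unfold bracketKernel
    rw [← ENNReal.ofReal_mul (by positivity)]
    simp [norm_smul, abs_of_pos hR]
  calc ∫⁻ x, bracketKernel R m x ∂μ
      = ENNReal.ofReal (R ^ finrank ℝ E) * ∫⁻ x, bracketKernel 1 m (R • x) ∂μ := by
        simp_rw [hscale]
        exact lintegral_const_mul _ (by fun_prop)
    _ = ENNReal.ofReal (R ^ finrank ℝ E) *
          (ENNReal.ofReal |(R ^ finrank ℝ E)⁻¹| * ∫⁻ x, bracketKernel 1 m x ∂μ) := by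
        rw [← lintegral_map (f := bracketKernel 1 m) (by fun_prop) (by fun_prop),
          Measure.map_addHaar_smul μ hR.ne', lintegral_smul_measure, smul_eq_mul]
    _ = ∫⁻ x, bracketKernel 1 m x ∂μ := by
        rw [← mul_assoc, ← ENNReal.ofReal_mul (by positivity), abs_of_pos (by positivity),
          mul_inv_cancel₀ (by positivity), ENNReal.ofReal_one, one_mul]

end BracketKernel

section Modular

variable {E : Type*} [NormedAddCommGroup E] {p : E → ℝ} {c l B R : ℝ} {k M m : ℕ}

lemma LogHolderWith.ofReal_pow_rpow_abs_sub_le (hp : LogHolderWith c p) (hR : 1 ≤ R)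
    (hM : k * c ≤ M) (x y : E) :
    ENNReal.ofReal (R ^ k) ^ |p x - p y| ≤
      ENNReal.ofReal ((Real.exp 1 * (1 + R * ‖x - y‖)) ^ M) := by
  have hR0 : 0 < R := zero_lt_one.trans_le hR
  rw [ENNReal.ofReal_rpow_of_pos (by positivity)]
  exact ENNReal.ofReal_le_ofReal (pow_rpow_le_pow_of_mul_log_le hR0
    (le_add_of_nonneg_right (by positivity)) (hp.abs_sub_mul_log_le hR0 x y) hM)

lemma LogDecayWith.ofReal_pow_rpow_abs_sub_le (hp : LogDecayWith c (fun x ↦ 1 / p x) l)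
    (hp0 : ∀ x, 0 < p x) (hpB : ∀ x, p x ≤ B) (hM : k * (B ^ 2 * (2 * c)) ≤ M) (x y : E) :
    ENNReal.ofReal ((1 + ‖y‖) ^ k) ^ |p x - p y| ≤
      ENNReal.ofReal ((Real.exp 1 * (1 + ‖x - y‖)) ^ M) := by
  have hy : 0 ≤ Real.log (1 + ‖y‖) := Real.log_nonneg (le_add_of_nonneg_right (norm_nonneg y))
  have hlog : |p x - p y| * Real.log (1 + ‖y‖) ≤
      B ^ 2 * (2 * c) * (1 + Real.log (1 + ‖x - y‖)) :=
    calc |p x - p y| * Real.log (1 + ‖y‖)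
        ≤ B ^ 2 * |1 / p x - 1 / p y| * Real.log (1 + ‖y‖) := by
          gcongr
          exact abs_sub_le_sq_mul_abs_one_div_sub (hp0 x) (hp0 y) (hpB x) (hpB y)
      _ = B ^ 2 * (|1 / p x - 1 / p y| * Real.log (1 + ‖y‖)) := mul_assoc _ _ _
      _ ≤ B ^ 2 * (2 * c * (1 + Real.log (1 + ‖x - y‖))) :=
          mul_le_mul_of_nonneg_left (hp.abs_sub_mul_log_le x y) (sq_nonneg B)
      _ = B ^ 2 * (2 * c) * (1 + Real.log (1 + ‖x - y‖)) := by ring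
  rw [ENNReal.ofReal_rpow_of_pos (by positivity)]
  exact ENNReal.ofReal_le_ofReal (pow_rpow_le_pow_of_mul_log_le (by positivity)
    (le_add_of_nonneg_right (norm_nonneg _)) hlog hM)

variable [NormedSpace ℝ E] [FiniteDimensional ℝ E] [MeasurableSpace E] [BorelSpace E]
  {μ : Measure E} [μ.IsAddHaarMeasure] {C : ℝ≥0∞}

lemma rpow_lintegral_mul_bracketKernel_le (hp : ∀ x, 1 ≤ p x) (hR : 1 ≤ R) {x : E}
    (hloc : ∀ y, ENNReal.ofReal (R ^ finrank ℝ E) ^ |p x - p y| ≤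
      ENNReal.ofReal ((Real.exp 1 * (1 + R * ‖x - y‖)) ^ M))
    (hinf : ∀ y, ENNReal.ofReal ((1 + ‖y‖) ^ k) ^ |p x - p y| ≤
      ENNReal.ofReal ((Real.exp 1 * (1 + ‖x - y‖)) ^ M))
    (hC : C ≠ ⊤) (hMC : ENNReal.ofReal (Real.exp 1 ^ M) ≤ C)
    (hkC : ∫⁻ y : E, bracketKernel 1 k y ∂μ ≤ C) {a : E → ℝ≥0∞} (ha : Measurable a)
    (hmod : ∫⁻ y, a y ^ p y ∂μ ≤ 1) :
    (∫⁻ y, a y * bracketKernel R (M + k) (x - y) ∂μ) ^ p x ≤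
      (2 * C) ^ p x * ∫⁻ y, (bracketKernel 1 k y + a y ^ p y) * bracketKernel R k (x - y) ∂μ := by
  have hR0 : 0 < R := zero_lt_one.trans_le hR
  refine rpow_lintegral_mul_le_lintegral_add_rpow_mul (T := ENNReal.ofReal (R ^ finrank ℝ E))
    ha (by fun_prop) (hp x) hp hmod (ENNReal.one_le_ofReal.2 (one_le_pow₀ hR))
    ENNReal.ofReal_ne_top (fun y ↦ ?_) hloc (fun y ↦ ?_) (fun y ↦ bracketKernel_le hR0.le _) hC ?_
    fun y ↦ ?_
  · simpa using bracketKernel_le (m := k) zero_le_one y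
  · rw [bracketKernel_one_inv]
    refine (hinf y).trans (ENNReal.ofReal_le_ofReal ?_)
    gcongr
    exact le_mul_of_one_le_left (norm_nonneg _) hR
  · calc ∫⁻ y, bracketKernel R (M + k) (x - y) ∂μ = ∫⁻ y, bracketKernel R (M + k) y ∂μ :=
          lintegral_sub_left_eq_self (bracketKernel R (M + k)) x
      _ ≤ ∫⁻ y, bracketKernel R k y ∂μ :=
          lintegral_mono fun y ↦ bracketKernel_anti hR0.le y (Nat.le_add_left k M)
      _ ≤ C := (lintegral_bracketKernel hR0).trans_le hkC
  · rw [mul_pow, ENNReal.ofReal_mul (by positivity), mul_assoc,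
      ofReal_pow_mul_bracketKernel_add hR0.le]
    gcongr

theorem exists_lintegral_rpow_lintegral_mul_bracketKernel_le (hp : ∀ x, 1 ≤ p x) {c₀ : ℝ}
    (hlog : LogHolderWith c p) (hdecay : LogDecayWith c₀ (fun x ↦ 1 / p x) l) :
    ∃ m, ∃ D : ℝ≥0∞, 1 ≤ D ∧ D ≠ ⊤ ∧ ∀ R, 1 ≤ R → ∀ a : E → ℝ≥0∞, Measurable a →
      ∫⁻ y, a y ^ p y ∂μ ≤ 1 →
      ∫⁻ x, (∫⁻ y, a y * bracketKernel R m (x - y) ∂μ) ^ p x ∂μ ≤ D := by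
  have hpm : Measurable p := hlog.continuous.measurable
  set k := finrank ℝ E + 1
  set B := p 0 + c
  have hpB (x) : p x ≤ B := by linarith [(abs_le.1 (hlog.abs_sub_le x 0)).2]
  obtain ⟨M, hM⟩ := exists_nat_ge (max (finrank ℝ E * c) (k * (B ^ 2 * (2 * c₀))))
  set I := ∫⁻ y : E, bracketKernel 1 k y ∂μ
  have hI : I ≠ ⊤ := lintegral_bracketKernel_one_ne_top (Nat.lt_succ_self _)
  set C := max 1 (max (ENNReal.ofReal (Real.exp 1 ^ M)) I)
  have hC : C ≠ ⊤ := by simp [C, hI]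
  refine ⟨M + k, max 1 ((2 * C) ^ B * ((I + 1) * I)), le_max_left _ _, ?_,
    fun R hR a ha hmod ↦ le_max_of_le_right ?_⟩
  · have : (2 * C) ^ B ≠ ⊤ := by finiteness
    exact max_ne_top ENNReal.one_ne_top (by finiteness)
  have h2C : 1 ≤ 2 * C := one_le_mul one_le_two (le_max_left _ _)
  calc ∫⁻ x, (∫⁻ y, a y * bracketKernel R (M + k) (x - y) ∂μ) ^ p x ∂μ
      ≤ ∫⁻ x, (2 * C) ^ B *
          ∫⁻ y, (bracketKernel 1 k y + a y ^ p y) * bracketKernel R k (x - y) ∂μ ∂μ := by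
        refine lintegral_mono fun x ↦ (rpow_lintegral_mul_bracketKernel_le hp hR
          (hlog.ofReal_pow_rpow_abs_sub_le hR (le_of_max_le_left hM) x)
          (hdecay.ofReal_pow_rpow_abs_sub_le (fun y ↦ zero_lt_one.trans_le (hp y)) hpB
            (le_of_max_le_right hM) x)
          hC (le_max_of_le_right (le_max_left _ _)) (le_max_of_le_right (le_max_right _ _))
          ha hmod).trans ?_
        gcongr
        exact hpB x
    _ = (2 * C) ^ B * ((∫⁻ y, bracketKernel 1 k y + a y ^ p y ∂μ) * I) := by
        rw [lintegral_const_mul _ (by fun_prop), lintegral_lintegral_mul_sub (by fun_prop)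
          (by fun_prop), lintegral_bracketKernel (zero_lt_one.trans_le hR)]
    _ ≤ (2 * C) ^ B * ((I + 1) * I) := by
        rw [lintegral_add_left (by fun_prop)]
        gcongr

end Modular

section PolynomialGrowth

lemma exists_norm_le_mul_inv_one_add_norm_pow {E F : Type*} [NormedAddCommGroup E]
    [NormedSpace ℝ E] [NormedAddCommGroup F] [NormedSpace ℝ F] (f : 𝓢(E, F)) (m : ℕ) :
    ∃ C : ℝ, 0 < C ∧ ∀ x, ‖f x‖ ≤ C * ((1 + ‖x‖) ^ m)⁻¹ := by
  refine ⟨2 ^ m * (Finset.Iic (m, 0)).sup (fun k ↦ SchwartzMap.seminorm ℝ k.1 k.2) f + 1,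
    by positivity, fun x ↦ ?_⟩
  have h := SchwartzMap.one_add_le_sup_seminorm_apply (𝕜 := ℝ) (m := (m, 0)) le_rfl le_rfl f x
  rw [norm_iteratedFDeriv_zero] at h
  rw [← div_eq_mul_inv, le_div_iff₀ (by positivity), mul_comm]
  linarith

variable {E : Type*} [NormedAddCommGroup E] {f K θ : E → ℂ} {k : ℕ} {C : ℝ}

lemma norm_mul_sub_le (hK : ∀ x, ‖K x‖ ≤ C * ((1 + ‖x‖) ^ k)⁻¹) (x z : E) :
    ‖f x * K (z - x)‖ ≤ C * (‖f x‖ * ((1 + ‖x‖) ^ k)⁻¹) * (1 + ‖z‖) ^ k := by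
  have hC : 0 ≤ C := by simpa using (norm_nonneg _).trans (hK 0)
  have hpeetre : ((1 + ‖x - z‖) ^ k)⁻¹ ≤ ((1 + ‖x‖) ^ k)⁻¹ * (1 + ‖z‖) ^ k := by
    simpa using inv_one_add_norm_sub_pow_le zero_le_one k x z
  calc ‖f x * K (z - x)‖ = ‖f x‖ * ‖K (z - x)‖ := norm_mul _ _
    _ ≤ ‖f x‖ * (C * ((1 + ‖x - z‖) ^ k)⁻¹) := by
        gcongr
        exact norm_sub_rev z x ▸ hK (z - x)
    _ ≤ ‖f x‖ * (C * (((1 + ‖x‖) ^ k)⁻¹ * (1 + ‖z‖) ^ k)) := by gcongr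
    _ = C * (‖f x‖ * ((1 + ‖x‖) ^ k)⁻¹) * (1 + ‖z‖) ^ k := by ring

variable [MeasurableSpace E] {μ : Measure E}

lemma integrable_mul_of_norm_le (hfm : Measurable f)
    (hf : Integrable (fun x ↦ ‖f x‖ * ((1 + ‖x‖) ^ k)⁻¹) μ) (hKm : Measurable K)
    (hK : ∀ x, ‖K x‖ ≤ C * ((1 + ‖x‖) ^ k)⁻¹) : Integrable (fun x ↦ f x * K x) μ := by
  refine (hf.const_mul C).mono' (by fun_prop) (.of_forall fun x ↦ ?_)
  rw [norm_mul, mul_left_comm]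
  gcongr
  exact hK x

variable [BorelSpace E]

lemma locallyIntegrable_of_integrable_mul_inv [LocallyCompactSpace E]
    (hfm : Measurable f) (hf : Integrable (fun x ↦ ‖f x‖ * ((1 + ‖x‖) ^ k)⁻¹) μ) :
    LocallyIntegrable f μ := by
  have hw : LocallyIntegrable (fun x ↦ ‖f x‖ * ((1 + ‖x‖) ^ k)⁻¹ * (1 + ‖x‖) ^ k) μ :=
    hf.locallyIntegrable.mul_continuous (by fun_prop)
  refine hw.mono hfm.aestronglyMeasurable (.of_forall fun x ↦ ?_)
  rw [inv_mul_cancel_right₀ (by positivity), norm_norm]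

lemma locallyIntegrable_integral_mul_sub [SecondCountableTopology E] [SFinite μ]
    [IsLocallyFiniteMeasure μ] (hfm : Measurable f)
    (hf : Integrable (fun x ↦ ‖f x‖ * ((1 + ‖x‖) ^ k)⁻¹) μ) (hKm : Measurable K)
    (hK : ∀ x, ‖K x‖ ≤ C * ((1 + ‖x‖) ^ k)⁻¹) :
    LocallyIntegrable (fun z ↦ ∫ x, f x * K (z - x) ∂μ) μ := by
  have hmeas : Measurable fun q : E × E ↦ f q.1 * K (q.2 - q.1) := by fun_prop
  have hdom : LocallyIntegrable
      (fun z : E ↦ (∫ x, C * (‖f x‖ * ((1 + ‖x‖) ^ k)⁻¹) ∂μ) * (1 + ‖z‖) ^ k) μ :=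
    (by fun_prop : Continuous _).locallyIntegrable
  refine hdom.mono hmeas.stronglyMeasurable.integral_prod_left'.aestronglyMeasurable
    (.of_forall fun z ↦ (?_ : _ ≤ _).trans (Real.le_norm_self _))
  rw [← integral_mul_const]
  exact norm_integral_le_of_norm_le ((hf.const_mul C).mul_const _)
    (.of_forall fun x ↦ norm_mul_sub_le hK x z)

lemma integral_mul_integral_sub_comm [SecondCountableTopology E] [SFinite μ] (hfm : Measurable f)
    (hf : Integrable (fun x ↦ ‖f x‖ * ((1 + ‖x‖) ^ k)⁻¹) μ) (hKm : Measurable K)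
    (hK : ∀ x, ‖K x‖ ≤ C * ((1 + ‖x‖) ^ k)⁻¹) (hθm : Measurable θ)
    (hθ : Integrable (fun z ↦ ‖θ z‖ * (1 + ‖z‖) ^ k) μ) :
    ∫ x, f x * ∫ z, K (z - x) * θ z ∂μ ∂μ = ∫ z, θ z * ∫ x, f x * K (z - x) ∂μ ∂μ := by
  have hprod : Integrable (fun q : E × E ↦ θ q.2 * (f q.1 * K (q.2 - q.1))) (μ.prod μ) := by
    refine ((hf.const_mul C).mul_prod hθ).mono' (by fun_prop) (.of_forall fun q ↦ ?_)
    calc ‖θ q.2 * (f q.1 * K (q.2 - q.1))‖ = ‖θ q.2‖ * ‖f q.1 * K (q.2 - q.1)‖ := norm_mul _ _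
      _ ≤ ‖θ q.2‖ * (C * (‖f q.1‖ * ((1 + ‖q.1‖) ^ k)⁻¹) * (1 + ‖q.2‖) ^ k) := by
          gcongr
          exact norm_mul_sub_le hK q.1 q.2
      _ = C * (‖f q.1‖ * ((1 + ‖q.1‖) ^ k)⁻¹) * (‖θ q.2‖ * (1 + ‖q.2‖) ^ k) := by ring
  calc ∫ x, f x * ∫ z, K (z - x) * θ z ∂μ ∂μ
      = ∫ x, ∫ z, θ z * (f x * K (z - x)) ∂μ ∂μ := by
        simp_rw [← integral_const_mul]
        congr! 4
        ring
    _ = ∫ z, ∫ x, θ z * (f x * K (z - x)) ∂μ ∂μ := integral_integral_swap hprod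
    _ = ∫ z, θ z * ∫ x, f x * K (z - x) ∂μ ∂μ := by simp_rw [integral_const_mul]

end PolynomialGrowth

section Reproducing

open FourierTransform

variable {V : Type*} [NormedAddCommGroup V] [InnerProductSpace ℝ V] [FiniteDimensional ℝ V]
  [MeasurableSpace V] [BorelSpace V] {r r' : ℝ} {f : V → ℂ} {k : ℕ}

/-- The Fourier transform of `f`, as a tempered distribution, is supported in the closed ball of
radius `r`: it vanishes on test functions supported off that ball. The pairing of `𝓕 f` with `φ`
is moved to `∫ f * 𝓕 φ`. -/
def IsBandLimited (r : ℝ) (f : V → ℂ) : Prop :=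
  ∀ φ : 𝓢(V, ℂ), (∀ ξ ∈ tsupport ⇑φ, r < ‖ξ‖) → ∫ x, f x * 𝓕 φ x = 0

lemma fourier_pairing_apply (ψ φ : 𝓢(V, ℂ)) (x : V) :
    𝓕 (pairing (.mul ℂ ℂ) ψ φ) x = ∫ z, 𝓕⁻ ψ (z - x) * 𝓕 φ z := by
  have hneg (g : 𝓢(V, ℂ)) (y : V) : 𝓕⁻ g (-y) = 𝓕 g y := by
    rw [fourierInv_coe, fourier_coe, Real.fourierInv_eq_fourier_neg, neg_neg]
  have hconv : 𝓕⁻ (pairing (.mul ℂ ℂ) ψ φ) = SchwartzMap.convolution (.mul ℂ ℂ) (𝓕⁻ ψ) (𝓕⁻ φ) := by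
    simp [SchwartzMap.convolution]
  rw [← hneg, hconv, SchwartzMap.convolution_apply, MeasureTheory.convolution,
    ← integral_sub_right_eq_self _ x]
  refine integral_congr_ae (.of_forall fun z ↦ ?_)
  have hz : -x - (z - x) = -z := by abel
  simp only [ContinuousLinearMap.mul_apply', hz, hneg]

lemma IsBandLimited.integral_mul_fourier_pairing (hf : IsBandLimited r f) (hr : r < r')
    (hfi : ∀ θ : 𝓢(V, ℂ), Integrable (fun x ↦ f x * θ x)) {ψ : 𝓢(V, ℂ)}
    (hψ : ∀ ξ, ‖ξ‖ < r' → ψ ξ = 1) (φ : 𝓢(V, ℂ)) :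
    ∫ x, f x * 𝓕 (pairing (.mul ℂ ℂ) ψ φ) x = ∫ x, f x * 𝓕 φ x := by
  have hsupp : ∀ ξ ∈ tsupport ⇑(φ - pairing (.mul ℂ ℂ) ψ φ), r < ‖ξ‖ := by
    intro ξ hξ
    contrapose! hξ
    refine notMem_tsupport_iff_eventuallyEq.2 ?_
    filter_upwards [(isOpen_lt continuous_norm continuous_const).mem_nhds (hξ.trans_lt hr)]
      with η hη
    simp [hψ η hη]
  have hsub : 𝓕 (φ - pairing (.mul ℂ ℂ) ψ φ) = 𝓕 φ - 𝓕 (pairing (.mul ℂ ℂ) ψ φ) :=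
    map_sub (fourierCLM ℂ 𝓢(V, ℂ)) _ _
  have hzero := hf _ hsupp
  simp only [hsub, sub_apply, mul_sub] at hzero
  rw [integral_sub (hfi _) (hfi _), sub_eq_zero] at hzero
  exact hzero.symm

theorem IsBandLimited.ae_eq_integral_mul_fourierInv_sub (hf : IsBandLimited r f) (hr : r < r')
    (hfm : Measurable f) (hfi : Integrable (fun x ↦ ‖f x‖ * ((1 + ‖x‖) ^ k)⁻¹)) {ψ : 𝓢(V, ℂ)}
    (hψ : ∀ ξ, ‖ξ‖ < r' → ψ ξ = 1) : ∀ᵐ z, f z = ∫ x, f x * 𝓕⁻ ψ (z - x) := by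
  obtain ⟨C, -, hK⟩ := exists_norm_le_mul_inv_one_add_norm_pow (𝓕⁻ ψ) k
  have hKm : Measurable (𝓕⁻ ψ : 𝓢(V, ℂ)) := (𝓕⁻ ψ).continuous.measurable
  have hfθ (θ : 𝓢(V, ℂ)) : Integrable (fun x ↦ f x * θ x) := by
    obtain ⟨C, -, hθ⟩ := exists_norm_le_mul_inv_one_add_norm_pow θ k
    exact integrable_mul_of_norm_le hfm hfi θ.continuous.measurable hθ
  refine ae_eq_of_integral_contDiff_smul_eq (locallyIntegrable_of_integrable_mul_inv hfm hfi)
    (locallyIntegrable_integral_mul_sub hfm hfi hKm hK) fun g hg hgs ↦ ?_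
  have hgs' : HasCompactSupport (fun x ↦ (g x : ℂ)) := hgs.comp_left Complex.ofReal_zero
  let θ : 𝓢(V, ℂ) := hgs'.toSchwartzMap (Complex.ofRealCLM.contDiff.comp hg)
  have hθi : Integrable (fun z ↦ ‖θ z‖ * (1 + ‖z‖) ^ k) :=
    Continuous.integrable_of_hasCompactSupport (by fun_prop) hgs'.norm.mul_right
  have hθ : 𝓕 (𝓕⁻ θ) = θ := by simp
  calc ∫ x, g x • f x = ∫ x, f x * 𝓕 (𝓕⁻ θ) x := by
        rw [hθ]
        exact integral_congr_ae (.of_forall fun x ↦ mul_comm (θ x) (f x))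
    _ = ∫ x, f x * 𝓕 (pairing (.mul ℂ ℂ) ψ (𝓕⁻ θ)) x :=
        (hf.integral_mul_fourier_pairing hr hfθ hψ _).symm
    _ = ∫ x, f x * ∫ z, 𝓕⁻ ψ (z - x) * θ z := by simp_rw [fourier_pairing_apply, hθ]
    _ = ∫ z, θ z * ∫ x, f x * 𝓕⁻ ψ (z - x) :=
        integral_mul_integral_sub_comm hfm hfi hKm hK θ.continuous.measurable hθi
    _ = ∫ z, g z • ∫ x, f x * 𝓕⁻ ψ (z - x) := rfl

lemma fourierInv_comp_inv_smul {R : ℝ} (hR : 0 < R) (f : V → ℂ) (x : V) :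
    𝓕⁻ (fun ξ ↦ f (R⁻¹ • ξ)) x = R ^ finrank ℝ V • 𝓕⁻ f (R • x) := by
  have h := Measure.integral_comp_smul (volume : Measure V)
    (fun ξ ↦ Real.fourierChar (inner ℝ ξ (R • x)) • f ξ) R⁻¹
  rw [inv_pow, inv_inv, abs_of_pos (by positivity)] at h
  rw [Real.fourierInv_eq, Real.fourierInv_eq, ← h]
  congr with ξ
  rw [inner_smul_left, inner_smul_right]
  simp [hR.ne']

lemma exists_schwartzMap_eq_one_enorm_fourierInv_le (m : ℕ) : ∃ C : ℝ, 0 < C ∧ ∀ R : ℝ, 0 < R →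
    ∃ ψ : 𝓢(V, ℂ), (∀ ξ, ‖ξ‖ < 4 * R → ψ ξ = 1) ∧
      ∀ x, ‖𝓕⁻ ψ x‖ₑ ≤ ENNReal.ofReal C * bracketKernel R m x := by
  let b : ContDiffBump (0 : V) := ⟨4, 5, by norm_num, by norm_num⟩
  have hbs : HasCompactSupport (fun x ↦ (b x : ℂ)) :=
    b.hasCompactSupport.comp_left Complex.ofReal_zero
  let ψ₀ : 𝓢(V, ℂ) := hbs.toSchwartzMap (Complex.ofRealCLM.contDiff.comp b.contDiff)
  obtain ⟨C, hC, hdecay⟩ := exists_norm_le_mul_inv_one_add_norm_pow (𝓕⁻ ψ₀) m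
  refine ⟨C, hC, fun R hR ↦ ?_⟩
  let ψ : 𝓢(V, ℂ) := compCLMOfContinuousLinearEquiv ℂ
    (ContinuousLinearEquiv.smulLeft (Units.mk0 R⁻¹ (inv_ne_zero hR.ne'))) ψ₀
  refine ⟨ψ, fun ξ hξ ↦ ?_, fun x ↦ ?_⟩
  · have hb : b (R⁻¹ • ξ) = 1 := by
      apply b.one_of_mem_closedBall
      rw [mem_closedBall_zero_iff, norm_smul, Real.norm_of_nonneg (by positivity),
        inv_mul_le_iff₀ hR, mul_comm]
      exact hξ.le
    exact (congrArg Complex.ofReal hb).trans Complex.ofReal_one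
  · have hscale : 𝓕⁻ ψ x = R ^ finrank ℝ V • 𝓕⁻ ψ₀ (R • x) := by
      rw [fourierInv_coe, fourierInv_coe]
      exact fourierInv_comp_inv_smul hR ψ₀ x
    have hRx : ‖R • x‖ = R * ‖x‖ := by rw [norm_smul, Real.norm_of_nonneg hR.le]
    rw [hscale, bracketKernel, ← ofReal_norm, norm_smul, Real.norm_of_nonneg (by positivity),
      ← ENNReal.ofReal_mul hC.le, mul_left_comm, ← hRx]
    gcongr
    exact hdecay (R • x)

theorem exists_enorm_le_lintegral_mul_bracketKernel (V : Type*) [NormedAddCommGroup V]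
    [InnerProductSpace ℝ V] [FiniteDimensional ℝ V] [MeasurableSpace V] [BorelSpace V] (m : ℕ) :
    ∃ C : ℝ, 0 < C ∧ ∀ R : ℝ, 0 < R → ∀ f : V → ℂ, Measurable f →
      (∃ k : ℕ, Integrable (fun x ↦ ‖f x‖ * ((1 + ‖x‖) ^ k)⁻¹)) → IsBandLimited (2 * R) f →
      ∀ᵐ z, ‖f z‖ₑ ≤ ENNReal.ofReal C * ∫⁻ w, ‖f w‖ₑ * bracketKernel R m (z - w) := by
  obtain ⟨C, hC, hcutoff⟩ := exists_schwartzMap_eq_one_enorm_fourierInv_le (V := V) m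
  refine ⟨C, hC, fun R hR f hfm ⟨k, hfi⟩ hf ↦ ?_⟩
  obtain ⟨ψ, hψ, hdecay⟩ := hcutoff R hR
  filter_upwards [hf.ae_eq_integral_mul_fourierInv_sub (by linarith) hfm hfi hψ] with z hz
  calc ‖f z‖ₑ = ‖∫ w, f w * 𝓕⁻ ψ (z - w)‖ₑ := by rw [← hz]
    _ ≤ ∫⁻ w, ‖f w * 𝓕⁻ ψ (z - w)‖ₑ := enorm_integral_le_lintegral_enorm _
    _ ≤ ∫⁻ w, ENNReal.ofReal C * (‖f w‖ₑ * bracketKernel R m (z - w)) := by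
        refine lintegral_mono fun w ↦ ?_
        rw [enorm_mul, mul_left_comm]
        exact mul_le_mul_right (hdecay _) _
    _ = ENNReal.ofReal C * ∫⁻ w, ‖f w‖ₑ * bracketKernel R m (z - w) :=
        lintegral_const_mul' _ _ ENNReal.ofReal_ne_top

end Reproducing

section WeightedConvolution

variable {E : Type*} [NormedAddCommGroup E] [NormedSpace ℝ E] [MeasurableSpace E] [BorelSpace E]
  [FiniteDimensional ℝ E] {μ : Measure E} [μ.IsAddHaarMeasure] {f g : E → ℂ} {R : ℝ} {m : ℕ}

lemma enorm_integral_sub_mul_le_mul_lintegral_bracketKernel (hR : 0 ≤ R) {C : ℝ≥0∞}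
    (hfm : Measurable f) (hgm : Measurable g)
    (hf : ∀ᵐ z ∂μ, ‖f z‖ₑ ≤ C * ∫⁻ w, ‖f w‖ₑ * bracketKernel R m (z - w) ∂μ) (x : E) :
    ‖∫ y, f (x - y) * g y ∂μ‖ₑ ≤ C * (∫⁻ y, ENNReal.ofReal ((1 + R * ‖y‖) ^ m) * ‖g y‖ₑ ∂μ) *
      ∫⁻ w, ‖f w‖ₑ * bracketKernel R m (x - w) ∂μ := by
  set A := ∫⁻ w, ‖f w‖ₑ * bracketKernel R m (x - w) ∂μ
  have hshift (y : E) : ∫⁻ w, ‖f w‖ₑ * bracketKernel R m (x - y - w) ∂μ ≤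
      A * ENNReal.ofReal ((1 + R * ‖y‖) ^ m) := by
    rw [← lintegral_mul_const _ (by fun_prop)]
    refine lintegral_mono fun w ↦ ?_
    rw [sub_right_comm, mul_assoc]
    exact mul_le_mul_right (bracketKernel_sub_le hR (x - w) y) _
  have hae := (quasiMeasurePreserving_sub_left μ x).ae hf
  calc ‖∫ y, f (x - y) * g y ∂μ‖ₑ ≤ ∫⁻ y, ‖f (x - y) * g y‖ₑ ∂μ :=
        enorm_integral_le_lintegral_enorm _
    _ ≤ ∫⁻ y, C * A * (ENNReal.ofReal ((1 + R * ‖y‖) ^ m) * ‖g y‖ₑ) ∂μ := by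
        refine lintegral_mono_ae (hae.mono fun y hy ↦ ?_)
        rw [enorm_mul, ← mul_assoc, mul_assoc C]
        gcongr
        exact hy.trans (mul_le_mul_right (hshift y) C)
    _ = C * A * ∫⁻ y, ENNReal.ofReal ((1 + R * ‖y‖) ^ m) * ‖g y‖ₑ ∂μ :=
        lintegral_const_mul _ (by fun_prop)
    _ = _ := mul_right_comm _ _ _

end WeightedConvolution

section ExponentialWeight

lemma exists_one_add_pow_le_mul_exp {c : ℝ} (hc : 0 < c) (m : ℕ) :
    ∃ C : ℝ, 0 < C ∧ ∀ u : ℝ, 0 ≤ u → (1 + u) ^ m ≤ C * Real.exp (c * u) := by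
  refine ⟨m.factorial / c ^ m * Real.exp c, by positivity, fun u hu ↦ ?_⟩
  have h := Real.pow_div_factorial_le_exp (c * (1 + u)) (by positivity) m
  rw [div_le_iff₀ (by positivity), mul_pow, mul_add, mul_one, Real.exp_add] at h
  rw [mul_assoc, div_mul_eq_mul_div, le_div_iff₀ (by positivity)]
  linarith

variable {E : Type*} [NormedAddCommGroup E] [NormedSpace ℝ E] [FiniteDimensional ℝ E]

lemma mul_norm_le_pow_finrank_mul_norm {R : ℝ} (hR : 1 ≤ R) (x : E) :
    R * ‖x‖ ≤ R ^ finrank ℝ E * ‖x‖ := by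
  rcases subsingleton_or_nontrivial E with _ | _
  · simp [Subsingleton.elim x 0]
  · gcongr
    exact le_self_pow₀ hR finrank_pos.ne'

lemma exists_lintegral_one_add_pow_mul_enorm_le [MeasurableSpace E] {μ : Measure E} {c : ℝ}
    (hc : 0 < c) (m : ℕ) :
    ∃ C : ℝ, 0 < C ∧ ∀ R : ℝ, 1 ≤ R → ∀ g : E → ℂ,
      Integrable (fun x ↦ Real.exp ((2 + R ^ finrank ℝ E * ‖x‖) * c) * ‖g x‖) μ →
      ∫⁻ y, ENNReal.ofReal ((1 + R * ‖y‖) ^ m) * ‖g y‖ₑ ∂μ ≤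
        ENNReal.ofReal (C * ∫ x, Real.exp ((2 + R ^ finrank ℝ E * ‖x‖) * c) * ‖g x‖ ∂μ) := by
  obtain ⟨C, hC, hexp⟩ := exists_one_add_pow_le_mul_exp hc m
  refine ⟨C, hC, fun R hR g hg ↦ ?_⟩
  rw [← integral_const_mul, ofReal_integral_eq_lintegral_ofReal (hg.const_mul C)
    (.of_forall fun x ↦ by positivity)]
  refine lintegral_mono fun y ↦ ?_
  rw [← ofReal_norm, ← ENNReal.ofReal_mul (by positivity), ← mul_assoc]
  gcongr
  calc (1 + R * ‖y‖) ^ m ≤ C * Real.exp (c * (R * ‖y‖)) := hexp _ (by positivity)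
    _ ≤ C * Real.exp ((2 + R ^ finrank ℝ E * ‖y‖) * c) := by
        rw [mul_comm c]
        gcongr
        linarith [mul_norm_le_pow_finrank_mul_norm hR y]

end ExponentialWeight

section Luxemburg

variable {n : ℕ} {p : EuclideanSpace ℝ (Fin n) → ℝ} {f g h : EuclideanSpace ℝ (Fin n) → ℂ}

lemma luxNorm_le_of_enorm_le_mul (hp : ∀ x, 1 ≤ p x) {F : EuclideanSpace ℝ (Fin n) → ℝ≥0∞}
    {c D : ℝ≥0∞} (hD : 1 ≤ D) (hD' : D ≠ ⊤) (hF : ∫⁻ x, F x ^ p x ≤ D)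
    (hh : ∀ x, ‖h x‖ₑ ≤ c * F x) : luxNorm p h ≤ D * c := by
  have hD0 : D ≠ 0 := (zero_lt_one.trans_le hD).ne'
  refine le_of_forall_gt_imp_ge_of_dense fun ε hε ↦ sInf_le ⟨pos_of_gt hε, ?_⟩
  have hpt (x) : (‖h x‖ₑ / ε) ^ p x ≤ D⁻¹ * F x ^ p x := by
    have hp0 : 0 ≤ p x := zero_le_one.trans (hp x)
    have hscale : ‖h x‖ₑ / ε ≤ D⁻¹ * F x := by
      refine ENNReal.div_le_of_le_mul ((hh x).trans ?_)
      rw [mul_right_comm, ← ENNReal.div_eq_inv_mul]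
      gcongr
      rw [ENNReal.le_div_iff_mul_le (.inl hD0) (.inl hD'), mul_comm]
      exact hε.le
    calc (‖h x‖ₑ / ε) ^ p x ≤ (D⁻¹ * F x) ^ p x := by gcongr
      _ = (D⁻¹) ^ p x * F x ^ p x := ENNReal.mul_rpow_of_nonneg _ _ hp0
      _ ≤ D⁻¹ * F x ^ p x := by
          gcongr
          exact ENNReal.rpow_le_self_of_le_one (ENNReal.inv_le_one.2 hD) (hp x)
  calc ∫⁻ x, (‖h x‖ₑ / ε) ^ p x ≤ ∫⁻ x, D⁻¹ * F x ^ p x := lintegral_mono hpt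
    _ = D⁻¹ * ∫⁻ x, F x ^ p x := lintegral_const_mul' _ _ (ENNReal.inv_ne_top.2 hD0)
    _ ≤ D⁻¹ * D := by gcongr
    _ = 1 := ENNReal.inv_mul_cancel hD0 hD'

lemma luxNorm_le_mul_of_forall {c : ℝ≥0∞} (hc : c ≠ ⊤) (hf : luxNorm p f < ⊤)
    (h_le : ∀ μ, μ ≠ 0 → μ ≠ ⊤ → ∫⁻ x, (‖f x‖ₑ / μ) ^ p x ≤ 1 → luxNorm p h ≤ c * μ) :
    luxNorm p h ≤ c * luxNorm p f := by
  refine ENNReal.le_mul_of_forall_lt (.inr hf.ne) (.inl hc) fun c' hc' ε hε ↦ ?_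
  obtain ⟨μ, ⟨hμ, hmod⟩, hμε⟩ := sInf_lt_iff.1 hε
  exact (h_le μ hμ.ne' hμε.ne_top hmod).trans (mul_le_mul' hc'.le hμε.le)

lemma integrable_norm_mul_of_luxNorm_lt_top (hp : ∀ x, 1 ≤ p x) (hfm : Measurable f)
    (hf : luxNorm p f < ⊤) {w : EuclideanSpace ℝ (Fin n) → ℝ} (hw : Integrable w)
    (hw1 : ∀ x, ‖w x‖ ≤ 1) : Integrable (fun x ↦ ‖f x‖ * w x) := by
  obtain ⟨μ, ⟨hμ, hmod⟩, hμt⟩ := sInf_lt_iff.1 hf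
  have hpt (x) : ‖‖f x‖ * w x‖ₑ ≤ μ * (‖w x‖ₑ + (‖f x‖ₑ / μ) ^ p x) := by
    have hwx : ‖w x‖ₑ ≤ 1 := by
      rw [← ofReal_norm]
      exact ENNReal.ofReal_le_one.2 (hw1 x)
    calc ‖‖f x‖ * w x‖ₑ = μ * (‖f x‖ₑ / μ * ‖w x‖ₑ) := by
          rw [enorm_mul, enorm_norm, ← mul_assoc, ENNReal.mul_div_cancel hμ.ne' hμt.ne]
      _ ≤ μ * (‖w x‖ₑ + (‖f x‖ₑ / μ) ^ p x) := by
          gcongr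
          rcases le_total (‖f x‖ₑ / μ) 1 with hle | hge
          · exact le_add_right (mul_le_of_le_one_left' hle)
          · exact le_add_left ((mul_le_of_le_one_right' hwx).trans
              (ENNReal.le_rpow_self_of_one_le hge (hp x)))
  refine ⟨hfm.norm.aestronglyMeasurable.mul hw.aestronglyMeasurable,
    (lintegral_mono hpt).trans_lt ?_⟩
  rw [lintegral_const_mul' _ _ hμt.ne, lintegral_add_left' hw.aestronglyMeasurable.enorm]
  exact ENNReal.mul_lt_top hμt (ENNReal.add_lt_top.2 ⟨hw.2, hmod.trans_lt ENNReal.one_lt_top⟩)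

lemma integrable_norm_mul_inv_one_add_pow_of_luxNorm_lt_top (hp : ∀ x, 1 ≤ p x)
    (hfm : Measurable f) (hf : luxNorm p f < ⊤) :
    Integrable (fun x ↦ ‖f x‖ * ((1 + ‖x‖) ^ (n + 1))⁻¹) := by
  refine integrable_norm_mul_of_luxNorm_lt_top hp hfm hf ?_ fun x ↦ ?_
  · have hint := integrable_one_add_norm (E := EuclideanSpace ℝ (Fin n)) (μ := volume)
      (r := (n + 1 : ℕ)) (by simp)
    refine hint.congr (.of_forall fun x ↦ ?_)
    simp only [Real.rpow_neg (show 0 ≤ 1 + ‖x‖ by positivity), Real.rpow_natCast]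
  · rw [Real.norm_of_nonneg (by positivity)]
    exact inv_le_one_of_one_le₀ (one_le_pow₀ (le_add_of_nonneg_right (norm_nonneg x)))

lemma luxNorm_integral_sub_mul_le_of_const {q : ℝ} (hq : 1 ≤ q) (hp : ∀ x, p x = q)
    (hfm : Measurable f) (hf : luxNorm p f < ⊤) (hgm : Measurable g) (hg : Integrable g) :
    luxNorm p (fun x ↦ ∫ y, f (x - y) * g y) ≤ (∫⁻ y, ‖g y‖ₑ) * luxNorm p f := by
  set G := ∫⁻ y, ‖g y‖ₑ
  have hG : G ≠ ⊤ := hg.2.ne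
  have hq0 : 0 ≤ q := zero_le_one.trans hq
  refine luxNorm_le_mul_of_forall hG hf fun μ hμ hμt hmod ↦ ?_
  simp only [hp] at hmod
  set A : EuclideanSpace ℝ (Fin n) → ℝ≥0∞ := fun x ↦ ∫⁻ y, ‖f (x - y)‖ₑ / μ * ‖g y‖ₑ
  have hA : ∫⁻ x, (G⁻¹ * A x) ^ p x ≤ 1 :=
    calc ∫⁻ x, (G⁻¹ * A x) ^ p x = (G⁻¹) ^ q * ∫⁻ x, A x ^ q := by
          simp_rw [hp, ENNReal.mul_rpow_of_nonneg _ _ hq0]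
          exact lintegral_const_mul _ (by fun_prop)
      _ ≤ (G⁻¹) ^ q * (G ^ q * 1) := by
          gcongr
          exact (lintegral_rpow_lintegral_sub_mul_le (F := fun y ↦ ‖f y‖ₑ / μ) hq (by fun_prop)
            hgm.enorm).trans (by gcongr)
      _ = (G⁻¹ * G) ^ q := by rw [mul_one, ENNReal.mul_rpow_of_nonneg _ _ hq0]
      _ ≤ 1 := ENNReal.rpow_le_one (ENNReal.inv_mul_le_one G) hq0
  rw [← one_mul (G * μ)]
  refine luxNorm_le_of_enorm_le_mul (fun x ↦ hq.trans_eq (hp x).symm) le_rfl one_ne_top hA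
    fun x ↦ ?_
  have hA0 : G = 0 → A x = 0 := fun h0 ↦ by
    have hg0 := (lintegral_eq_zero_iff hgm.enorm).1 h0
    exact lintegral_eq_zero_of_ae_eq_zero (hg0.mono fun y hy ↦ by simp_all)
  calc ‖∫ y, f (x - y) * g y‖ₑ ≤ ∫⁻ y, ‖f (x - y) * g y‖ₑ := enorm_integral_le_lintegral_enorm _
    _ = μ * A x := by
        rw [← lintegral_const_mul' _ _ hμt]
        simp_rw [enorm_mul, ← mul_assoc, ENNReal.mul_div_cancel hμ hμt]
    _ = G * μ * (G⁻¹ * A x) := by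
        rw [mul_comm G, mul_assoc, ← ENNReal.div_eq_inv_mul,
          ENNReal.mul_div_cancel' hA0 fun h ↦ absurd h hG]

theorem exists_luxNorm_integral_sub_mul_le_of_isBandLimited (hp : ∀ x, 1 ≤ p x) {c₀ c l : ℝ}
    (hlog : LogHolderWith c p) (hdecay : LogDecayWith c₀ (fun x ↦ 1 / p x) l) :
    ∃ m : ℕ, ∃ C : ℝ, 0 < C ∧ ∀ R : ℝ, 1 ≤ R → ∀ f g : EuclideanSpace ℝ (Fin n) → ℂ,
      Measurable f → luxNorm p f < ⊤ → IsBandLimited (2 * R) f → Measurable g →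
      ∫⁻ y, ENNReal.ofReal ((1 + R * ‖y‖) ^ m) * ‖g y‖ₑ ≠ ⊤ →
      luxNorm p (fun x ↦ ∫ y, f (x - y) * g y) ≤
        ENNReal.ofReal C * (∫⁻ y, ENNReal.ofReal ((1 + R * ‖y‖) ^ m) * ‖g y‖ₑ) *
          luxNorm p f := by
  obtain ⟨m, D, hD1, hD, hmodular⟩ := exists_lintegral_rpow_lintegral_mul_bracketKernel_le
    (μ := volume) hp hlog hdecay
  obtain ⟨C, hC, hrepr⟩ := exists_enorm_le_lintegral_mul_bracketKernel
    (EuclideanSpace ℝ (Fin n)) m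
  have hD0 : 0 < D.toReal := ENNReal.toReal_pos (zero_lt_one.trans_le hD1).ne' hD
  refine ⟨m, D.toReal * C, by positivity, fun R hR f g hfm hf hband hgm hW ↦ ?_⟩
  have hR0 : 0 < R := zero_lt_one.trans_le hR
  have hpt := enorm_integral_sub_mul_le_mul_lintegral_bracketKernel hR0.le hfm hgm
    (hrepr R hR0 f hfm ⟨_, integrable_norm_mul_inv_one_add_pow_of_luxNorm_lt_top hp hfm hf⟩ hband)
  set W := ∫⁻ y, ENNReal.ofReal ((1 + R * ‖y‖) ^ m) * ‖g y‖ₑ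
  rw [ENNReal.ofReal_mul hD0.le, ENNReal.ofReal_toReal hD]
  refine luxNorm_le_mul_of_forall (by finiteness) hf fun μ hμ hμt hmod ↦ ?_
  rw [mul_assoc D, mul_assoc D]
  refine luxNorm_le_of_enorm_le_mul hp hD1 hD
    (hmodular R hR (fun y ↦ ‖f y‖ₑ / μ) (by fun_prop) hmod) fun x ↦ (hpt x).trans_eq ?_
  rw [mul_assoc _ μ, ← lintegral_const_mul' _ _ hμt]
  simp_rw [← mul_assoc μ, ENNReal.mul_div_cancel hμ hμt]

end Luxemburg

theorem convolution_bounded_bandlimited_general (n : ℕ) (p : EuclideanSpace ℝ (Fin n) → ℝ)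
    (cLog cLogP pInf : ℝ) (hp : ∀ x, 1 ≤ p x)
    (hdecay : LogDecayWith cLog (fun x ↦ 1 / p x) (1 / pInf)) (hlogp : LogHolderWith cLogP p) :
    ∃ c > 0, ∀ (v : ℕ) (f g : EuclideanSpace ℝ (Fin n) → ℂ),
      Measurable f → luxNorm p f < ⊤ → IsBandLimited (2 ^ (v + 1)) f → Measurable g →
      Integrable (fun x ↦ Real.exp ((2 + 2 ^ (v * n) * ‖x‖) * cLogP) * ‖g x‖) →
      luxNorm p (fun x ↦ ∫ y, f (x - y) * g y) ≤
        ENNReal.ofReal (c * ∫ x, Real.exp ((2 + 2 ^ (v * n) * ‖x‖) * cLogP) * ‖g x‖) *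
          luxNorm p f := by
  rcases hlogp.nonneg.eq_or_lt with rfl | hcpos
  · have hconst (x) : p x = p 0 := by simpa [sub_eq_zero] using hlogp x 0
    refine ⟨1, one_pos, fun v f g hfm hf _ hgm hint ↦ ?_⟩
    simp only [mul_zero, Real.exp_zero, one_mul] at hint ⊢
    have hg : Integrable g := (integrable_norm_iff hgm.aestronglyMeasurable).1 hint
    rw [ofReal_integral_norm_eq_lintegral_enorm hg]
    exact luxNorm_integral_sub_mul_le_of_const (hp 0) hconst hfm hf hgm hg
  · obtain ⟨m, C, hC, hconv⟩ := exists_luxNorm_integral_sub_mul_le_of_isBandLimited hp hlogp hdecay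
    obtain ⟨C', hC', hweight⟩ := exists_lintegral_one_add_pow_mul_enorm_le
      (E := EuclideanSpace ℝ (Fin n)) (μ := volume) hcpos m
    refine ⟨C * C', by positivity, fun v f g hfm hf hband hgm hint ↦ ?_⟩
    have hR : (1 : ℝ) ≤ 2 ^ v := one_le_pow₀ one_le_two
    rw [pow_succ'] at hband
    have hW := hweight (2 ^ v) hR g
    simp only [finrank_euclideanSpace_fin, ← pow_mul] at hW
    refine (hconv _ hR f g hfm hf hband hgm (ne_top_of_le_ne_top ofReal_ne_top (hW hint))).trans ?_
    rw [mul_assoc C, ENNReal.ofReal_mul hC.le]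
    gcongr
    exact hW hint

/-- Weighted convolution estimate: for band-limited `f ∈ L^{p(·)}` and `g` with finite
weighted `L¹` norm `‖exp((2 + 2^{vn}|·|) c_log(p)) g‖₁`, one has
`‖f * g‖_{p(·)} ≤ c ‖exp((2 + 2^{vn}|·|) c_log(p)) g‖₁ ‖f‖_{p(·)}`, `c` independent of `v`. -/
theorem convolution_bounded_bandlimited (n : ℕ) (p : EuclideanSpace ℝ (Fin n) → ℝ)
    (cLog cLogP pm pp pInf : ℝ) (hpmeas : Measurable p)
    (hpm : 1 < pm) (hbounds : ∀ x, pm ≤ p x ∧ p x ≤ pp)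
    (hlog : ∀ x y, |1 / p x - 1 / p y| ≤ cLog / Real.log (Real.exp 1 + 1 / ‖x - y‖))
    (hdecay : ∀ x, |1 / p x - 1 / pInf| ≤ cLog / Real.log (Real.exp 1 + ‖x‖))
    (hlogp : ∀ x y, |p x - p y| ≤ cLogP / Real.log (Real.exp 1 + 1 / ‖x - y‖)) :
    ∃ c > 0, ∀ (v : ℕ) (f g : EuclideanSpace ℝ (Fin n) → ℂ),
      Measurable f → luxNorm p f < ⊤ →
      (∀ φ : 𝓢(EuclideanSpace ℝ (Fin n), ℂ),
        (∀ ξ ∈ tsupport ⇑φ, (2 : ℝ) ^ (v + 1) < ‖ξ‖) →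
        ∫ x, f x * fourierTransformCLM ℂ φ x = 0) →
      Measurable g →
      Integrable (fun x => Real.exp ((2 + 2 ^ (v * n) * ‖x‖) * cLogP) * ‖g x‖) →
      luxNorm p (fun x => ∫ y, f (x - y) * g y) ≤
        ENNReal.ofReal
            (c * ∫ x, Real.exp ((2 + 2 ^ (v * n) * ‖x‖) * cLogP) * ‖g x‖) *
          luxNorm p f :=
  convolution_bounded_bandlimited_general n p cLog cLogP pInf
    (fun x ↦ hpm.le.trans (hbounds x).1) hdecay hlogp
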